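/- arXiv:2405.10179 — 2 statements merged into one kernel-verified Lean document; each statement's English description precedes it below -/
import Mathlib

section
/- In the nonlinear setting with standing conditions (N1)–(N5): for every δ > 0 and every ε > 0 there exists n_0 ∈ ℕ such that for every n ≥ n_0 and every closed interval Δ ⊂ [0,1] with |Δ| ≥ δ, one has m_n(Δ)/|Δ|^{h_n} ≤ 1 + ε. -/
open Set Filter MeasureTheory Topology

noncomputable section

/-- Composition `g_{i₁} ∘ g_{i₂} ∘ ⋯ ∘ g_{i_l}` along a finite word. -/
def wordComp (g : ℕ → ℝ → ℝ) : List ℕ → ℝ → ℝ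
  | [] => id
  | k :: w => g k ∘ wordComp g w

/-- The limit set `J_n` of the IFS `S_n = {g_1, …, g_n}`. -/
def limitSet (g : ℕ → ℝ → ℝ) (n : ℕ) : Set ℝ :=
  ⋂ l : ℕ, ⋃ w ∈ {w : List ℕ | w.length = l + 1 ∧ ∀ i ∈ w, 1 ≤ i ∧ i ≤ n},
    wordComp g w '' Set.Icc (0 : ℝ) 1

/-- The distortion `κ(g) = sup_{x,y ∈ [0,1]} |g′(y)|/|g′(x)|` of a map with derivative `f'`. -/
def distortion (f' : ℝ → ℝ) : ℝ :=
  ⨆ x ∈ Set.Icc (0 : ℝ) 1, ⨆ y ∈ Set.Icc (0 : ℝ) 1, |f' y| / |f' x|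

/-- The nonlinear setting of the paper: a strictly decreasing sequence `b_k → 0` with `b_0 = 1`,
    decreasing `C²` diffeomorphisms `g_k : [0,1] → [b_k, b_{k-1}]` (with first and second
    derivatives `g'` and `g''`), the Hausdorff dimensions `h_n` of the limit sets `J_n`, and
    the standing conditions (N1)–(N5). -/
structure NonlinearIFS where
  b : ℕ → ℝ
  g : ℕ → ℝ → ℝ
  g' : ℕ → ℝ → ℝ
  g'' : ℕ → ℝ → ℝ
  h : ℕ → ℝ
  b_zero : b 0 = 1
  b_anti : StrictAnti b
  b_lim : Filter.Tendsto b Filter.atTop (nhds 0)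
  g_image : ∀ k, 1 ≤ k → g k '' Set.Icc (0 : ℝ) 1 = Set.Icc (b k) (b (k - 1))
  g_anti : ∀ k, 1 ≤ k → StrictAntiOn (g k) (Set.Icc (0 : ℝ) 1)
  g_zero : ∀ k, 1 ≤ k → g k 0 = b (k - 1)
  g_one : ∀ k, 1 ≤ k → g k 1 = b k
  deriv1 : ∀ k, 1 ≤ k → ∀ x ∈ Set.Icc (0 : ℝ) 1, HasDerivAt (g k) (g' k x) x
  deriv2 : ∀ k, 1 ≤ k → ∀ x ∈ Set.Icc (0 : ℝ) 1, HasDerivAt (g' k) (g'' k x) x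
  deriv_ne : ∀ k, 1 ≤ k → ∀ x ∈ Set.Icc (0 : ℝ) 1, g' k x ≠ 0
  h_dim : ∀ n, 1 ≤ n → dimH (limitSet g n) = ENNReal.ofReal (h n)
  N1 : Filter.Tendsto (fun n : ℕ => (1 - h n) * Real.log n) Filter.atTop (nhds 0)
  N2 : Filter.Tendsto (fun n : ℕ => ⨆ k ∈ Set.Ici n, b k / b (k + 1)) Filter.atTop (nhds 1)
  N3 : ∃ c : ℝ, 0 < c ∧ ∀ n, 1 ≤ n → ∀ x ∈ Set.Icc (0 : ℝ) 1, |g'' n x / g' n x| < c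
  N4 : Filter.Tendsto (fun n : ℕ => distortion (g' n)) Filter.atTop (nhds 1)
  N5 : ∃ α : ℝ, α < 1 ∧ ∀ n, 1 ≤ n → ∀ x ∈ Set.Icc (0 : ℝ) 1, |g' n x| < α

/-- The normalized Hausdorff measure `m_n(A) = H_{h_n}(A ∩ J_n)/H_{h_n}(J_n)`. -/
def normMeas (S : NonlinearIFS) (n : ℕ) (A : Set ℝ) : ENNReal :=
  μH[S.h n] (A ∩ limitSet S.g n) / μH[S.h n] (limitSet S.g n)

/-- Nonnegative functions on `[0,1]` whose logarithm is `C`-Lipschitz. -/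
def InCone (C : ℝ) (ψ : ℝ → ℝ) : Prop :=
  (∀ x ∈ Icc (0:ℝ) 1, 0 ≤ ψ x) ∧
    ∀ x ∈ Icc (0:ℝ) 1, ∀ y ∈ Icc (0:ℝ) 1, ψ x ≤ Real.exp (C * |x - y|) * ψ y

lemma InCone.continuousOn {C : ℝ} {ψ : ℝ → ℝ} (h : InCone C ψ) :
    ContinuousOn ψ (Icc (0:ℝ) 1) := by
  intro y hy
  have h1 : Tendsto (fun x => Real.exp (-(C * |x - y|)) * ψ y) (𝓝[Icc (0:ℝ) 1] y) (𝓝 (ψ y)) := by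
    have : Continuous (fun x => Real.exp (-(C * |x - y|)) * ψ y) := by fun_prop
    have := (this.tendsto y).mono_left (nhdsWithin_le_nhds (s := Icc (0:ℝ) 1))
    simpa using this
  have h2 : Tendsto (fun x => Real.exp (C * |x - y|) * ψ y) (𝓝[Icc (0:ℝ) 1] y) (𝓝 (ψ y)) := by
    have : Continuous (fun x => Real.exp (C * |x - y|) * ψ y) := by fun_prop
    have := (this.tendsto y).mono_left (nhdsWithin_le_nhds (s := Icc (0:ℝ) 1))
    simpa using this
  refine tendsto_of_tendsto_of_tendsto_of_le_of_le' h1 h2 ?_ ?_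
  · filter_upwards [self_mem_nhdsWithin] with x hx
    have := h.2 y hy x hx
    rw [abs_sub_comm] at this
    rw [Real.exp_neg, inv_mul_le_iff₀ (Real.exp_pos _)]
    exact this
  · filter_upwards [self_mem_nhdsWithin] with x hx
    exact h.2 x hx y hy

lemma InCone.mono {C D : ℝ} {ψ : ℝ → ℝ} (h : InCone C ψ) (hCD : C ≤ D) : InCone D ψ := by
  refine ⟨h.1, fun x hx y hy => (h.2 x hx y hy).trans ?_⟩
  have := h.1 y hy
  gcongr

lemma InCone.sum {C : ℝ} {ι : Type*} (s : Finset ι) {ψ : ι → ℝ → ℝ} (h : ∀ i ∈ s, InCone C (ψ i)) :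
    InCone C (fun x => ∑ i ∈ s, ψ i x) := by
  refine ⟨fun x hx => Finset.sum_nonneg fun i hi => (h i hi).1 x hx, fun x hx y hy => ?_⟩
  rw [Finset.mul_sum]
  exact Finset.sum_le_sum fun i hi => (h i hi).2 x hx y hy

lemma InCone.mul {C D : ℝ} {φ ψ : ℝ → ℝ} (h : InCone C φ) (h' : InCone D ψ) :
    InCone (C + D) (fun x => φ x * ψ x) := by
  refine ⟨fun x hx => mul_nonneg (h.1 x hx) (h'.1 x hx), fun x hx y hy => ?_⟩
  have := mul_le_mul (h.2 x hx y hy) (h'.2 x hx y hy) (h'.1 x hx)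
    (mul_nonneg (Real.exp_pos _).le (h.1 y hy))
  refine this.trans (le_of_eq ?_)
  rw [add_mul, Real.exp_add]; ring

/-- Subtracting a small constant from a function in a smaller cone stays in the larger cone. -/
lemma InCone.sub_const {C C' κ : ℝ} {u : ℝ → ℝ} (h : InCone C' u) (hC' : 0 ≤ C') (hC : C' < C)
    (hκ : ∀ x ∈ Icc (0:ℝ) 1, κ ≤ (1 - C' / C) * u x) :
    InCone C (fun x => u x - κ) := by
  have hCp : 0 < C := by linarith
  have hr0 : 0 ≤ C' / C := by positivity
  have hr1 : C' / C ≤ 1 := by rw [div_le_one hCp]; exact hC.le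
  constructor
  · intro x hx
    have h1 := hκ x hx
    have h2 := h.1 x hx
    have : 0 ≤ C' / C * u x := by positivity
    linarith
  · intro x hx y hy
    have hu := h.2 x hx y hy
    set d := |x - y|
    have hd : 0 ≤ d := abs_nonneg _
    have hk := hκ y hy
    have hconv : Real.exp (C' * d) ≤ C' / C * Real.exp (C * d) + (1 - C' / C) := by
      have := convexOn_exp.2 (mem_univ (C * d)) (mem_univ 0) hr0 (sub_nonneg.2 hr1) (by ring)
      simp only [smul_eq_mul, mul_zero, add_zero, Real.exp_zero, mul_one] at this
      rwa [← mul_assoc, div_mul_cancel₀ _ hCp.ne'] at this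
    have huy := h.1 y hy
    have he : 1 ≤ Real.exp (C * d) := Real.one_le_exp (by positivity)
    have h3 : Real.exp (C' * d) * u y ≤ (C' / C * Real.exp (C * d) + (1 - C' / C)) * u y := by
      gcongr
    have h4 : (Real.exp (C * d) - 1) * κ ≤ (Real.exp (C * d) - 1) * ((1 - C' / C) * u y) :=
      mul_le_mul_of_nonneg_left hk (by linarith)
    simp only
    nlinarith

lemma InCone.integrableOn {C : ℝ} {ψ : ℝ → ℝ} (h : InCone C ψ) (m : Measure ℝ)
    [IsFiniteMeasureOnCompacts m] : IntegrableOn ψ (Icc (0:ℝ) 1) m :=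
  h.continuousOn.integrableOn_compact isCompact_Icc

lemma InCone.le_integral {C : ℝ} {ψ : ℝ → ℝ} (h : InCone C ψ) (hC : 0 ≤ C) {y : ℝ}
    (hy : y ∈ Icc (0:ℝ) 1) : ψ y ≤ Real.exp C * ∫ x in Icc (0:ℝ) 1, ψ x := by
  have h1 : ∫ x in Icc (0:ℝ) 1, ψ y ≤ ∫ x in Icc (0:ℝ) 1, Real.exp C * ψ x := by
    refine setIntegral_mono_on (by simp) ((h.integrableOn volume).const_mul _)
      measurableSet_Icc fun x hx => ?_
    refine (h.2 y hy x hx).trans ?_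
    have := h.1 x hx
    gcongr
    have : |y - x| ≤ 1 := by rw [abs_le]; constructor <;> linarith [hx.1, hx.2, hy.1, hy.2]
    nlinarith
  rw [integral_const_mul] at h1
  simpa using h1

lemma InCone.integral_le {C : ℝ} {ψ : ℝ → ℝ} (h : InCone C ψ) (hC : 0 ≤ C) {y : ℝ}
    (hy : y ∈ Icc (0:ℝ) 1) : Real.exp (-C) * ∫ x in Icc (0:ℝ) 1, ψ x ≤ ψ y := by
  have h1 : ∫ x in Icc (0:ℝ) 1, ψ x ≤ ∫ x in Icc (0:ℝ) 1, Real.exp C * ψ y := by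
    refine setIntegral_mono_on (h.integrableOn volume) (integrable_const _)
      measurableSet_Icc fun x hx => ?_
    refine (h.2 x hx y hy).trans ?_
    have := h.1 y hy
    gcongr
    have : |x - y| ≤ 1 := by rw [abs_le]; constructor <;> linarith [hx.1, hx.2, hy.1, hy.2]
    nlinarith
  rw [Real.exp_neg, inv_mul_le_iff₀ (Real.exp_pos _)]
  simpa using h1

lemma InCone.integral_nonneg {C : ℝ} {ψ : ℝ → ℝ} (h : InCone C ψ) (m : Measure ℝ) :
    0 ≤ ∫ x in Icc (0:ℝ) 1, ψ x ∂m :=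
  setIntegral_nonneg measurableSet_Icc h.1

/-! ### limit set -/

lemma wordComp_append (g : ℕ → ℝ → ℝ) (w : List ℕ) (j : ℕ) :
    wordComp g (w ++ [j]) = wordComp g w ∘ g j := by
  induction w with
  | nil => rfl
  | cons k w ih => simp only [List.cons_append, wordComp, ih]; rfl

lemma S_mapsTo (S : NonlinearIFS) {k : ℕ} (hk : 1 ≤ k) {x : ℝ} (hx : x ∈ Icc (0:ℝ) 1) :
    S.g k x ∈ Icc (0:ℝ) 1 := by
  have h1 : S.g k x ∈ Icc (S.b k) (S.b (k - 1)) := by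
    rw [← S.g_image k hk]; exact mem_image_of_mem _ hx
  have h2 : 0 ≤ S.b k := S.b_anti.antitone.le_of_tendsto S.b_lim k
  have h3 : S.b (k - 1) ≤ 1 := by rw [← S.b_zero]; exact S.b_anti.antitone (Nat.zero_le _)
  exact ⟨h2.trans h1.1, h1.2.trans h3⟩

lemma wordComp_mapsTo (S : NonlinearIFS) (w : List ℕ) (hw : ∀ i ∈ w, 1 ≤ i) {x : ℝ}
    (hx : x ∈ Icc (0:ℝ) 1) : wordComp S.g w x ∈ Icc (0:ℝ) 1 := by
  induction w with
  | nil => exact hx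
  | cons k w ih =>
    exact S_mapsTo S (hw k (by simp)) (ih fun i hi => hw i (by simp [hi]))

lemma limitSet_subset (S : NonlinearIFS) (n : ℕ) : limitSet S.g n ⊆ Icc (0:ℝ) 1 := by
  intro x hx
  have := mem_iInter.1 hx 0
  simp only [mem_iUnion] at this
  obtain ⟨w, hw, y, hy, rfl⟩ := this
  exact wordComp_mapsTo S w (fun i hi => (hw.2 i hi).1) hy

lemma limitSet_cover (S : NonlinearIFS) (n : ℕ) :
    limitSet S.g n ⊆ ⋃ k ∈ Finset.Icc 1 n, S.g k '' limitSet S.g n := by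
  intro x hx
  have H : ∀ l : ℕ, ∃ k : Finset.Icc 1 n, ∃ w : List ℕ, w.length = l + 1 ∧
      (∀ i ∈ w, 1 ≤ i ∧ i ≤ n) ∧ ∃ z ∈ Icc (0:ℝ) 1, S.g k (wordComp S.g w z) = x := by
    intro l
    have := mem_iInter.1 hx (l + 1)
    simp only [mem_iUnion] at this
    obtain ⟨w, hw, y, hy, hyx⟩ := this
    obtain ⟨hl, hw⟩ := hw
    match w, hl, hw, hyx with
    | k :: w, hl, hw, hyx =>
      refine ⟨⟨k, Finset.mem_Icc.2 (hw k (by simp))⟩, w, by simpa using hl,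
        fun i hi => hw i (by simp [hi]), y, hy, hyx⟩
  choose k w hl hw z hz hx' using H
  obtain ⟨k₀, hk₀⟩ := Finite.exists_infinite_fiber k
  have hinf : (k ⁻¹' {k₀}).Infinite := Set.infinite_coe_iff.1 hk₀
  have hk1 : 1 ≤ (k₀ : ℕ) := (Finset.mem_Icc.1 k₀.2).1
  obtain ⟨l₀, hl₀⟩ := hinf.nonempty
  have hI : ∀ l, wordComp S.g (w l) (z l) ∈ Icc (0:ℝ) 1 := fun l =>
    wordComp_mapsTo S _ (fun i hi => (hw l i hi).1) (hz l)
  simp only [mem_iUnion]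
  refine ⟨k₀, k₀.2, wordComp S.g (w l₀) (z l₀), ?_, ?_⟩
  · refine mem_iInter.2 fun l => ?_
    obtain ⟨l', hl', hll'⟩ := hinf.exists_gt l
    have heq : wordComp S.g (w l₀) (z l₀) = wordComp S.g (w l') (z l') := by
      refine (S.g_anti k₀ hk1).injOn (hI _) (hI _) ?_
      have e1 := hx' l₀
      have e2 := hx' l'
      rw [mem_preimage, mem_singleton_iff] at hl₀ hl'
      rw [hl₀] at e1
      rw [hl'] at e2
      rw [e1, e2]
    rw [heq]
    have key : ∀ (d : ℕ) (v : List ℕ), v.length = l + 1 + d → (∀ i ∈ v, 1 ≤ i ∧ i ≤ n) →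
        ∀ y ∈ Icc (0:ℝ) 1, wordComp S.g v y ∈
        ⋃ w ∈ {w : List ℕ | w.length = l + 1 ∧ ∀ i ∈ w, 1 ≤ i ∧ i ≤ n},
          wordComp S.g w '' Set.Icc (0 : ℝ) 1 := by
      intro d
      induction d with
      | zero =>
        intro v hv hv' y hy
        simp only [mem_iUnion]
        exact ⟨v, ⟨hv, hv'⟩, y, hy, rfl⟩
      | succ d ih =>
        intro v hv hv' y hy
        rcases List.eq_nil_or_concat v with h | ⟨v', j, h⟩
        · subst h; simp at hv
        · rw [List.concat_eq_append] at h
          subst h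
          rw [wordComp_append]
          refine ih v' (by simp at hv; omega) (fun i hi => hv' i (by simp [hi])) _ ?_
          exact S_mapsTo S (hv' j (by simp)).1 hy
    exact key (l' - l) (w l') (by rw [hl]; omega) (hw l') _ (hz l')
  · have := hx' l₀
    rw [mem_preimage, mem_singleton_iff] at hl₀
    rwa [hl₀] at this

/-! ### distortion and contraction -/

lemma deriv_inCone (S : NonlinearIFS) {c : ℝ}
    (hc : ∀ n, 1 ≤ n → ∀ x ∈ Set.Icc (0 : ℝ) 1, |S.g'' n x / S.g' n x| < c) {k : ℕ} (hk : 1 ≤ k) :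
    InCone c (fun x => |S.g' k x|) := by
  refine ⟨fun x _ => abs_nonneg _, fun x hx y hy => ?_⟩
  have h1 : ‖Real.log (S.g' k x) - Real.log (S.g' k y)‖ ≤ c * ‖x - y‖ :=
    Convex.norm_image_sub_le_of_norm_hasDerivWithin_le (s := Icc (0:ℝ) 1)
      (f' := fun x => S.g'' k x / S.g' k x)
      (fun z hz => ((S.deriv2 k hk z hz).log (S.deriv_ne k hk z hz)).hasDerivWithinAt)
      (fun z hz => (hc k hk z hz).le) (convex_Icc 0 1) hy hx
  have h2 := (abs_le.1 h1).2
  simp only [Real.norm_eq_abs] at h2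
  change |S.g' k x| ≤ Real.exp (c * |x - y|) * |S.g' k y|
  rw [← Real.exp_log_eq_abs (S.deriv_ne k hk x hx), ← Real.exp_log_eq_abs (S.deriv_ne k hk y hy),
    ← Real.exp_add, Real.exp_le_exp]
  linarith

lemma g_contract (S : NonlinearIFS) {α : ℝ}
    (hα : ∀ n, 1 ≤ n → ∀ x ∈ Set.Icc (0 : ℝ) 1, |S.g' n x| < α) {k : ℕ} (hk : 1 ≤ k)
    {x y : ℝ} (hx : x ∈ Icc (0:ℝ) 1) (hy : y ∈ Icc (0:ℝ) 1) :
    |S.g k x - S.g k y| ≤ α * |x - y| :=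
  Convex.norm_image_sub_le_of_norm_hasDerivWithin_le (s := Icc (0:ℝ) 1)
      (fun z hz => (S.deriv1 k hk z hz).hasDerivWithinAt)
      (fun z hz => (hα k hk z hz).le) (convex_Icc 0 1) hy hx

lemma comp_inCone (S : NonlinearIFS) {α C : ℝ}
    (hα : ∀ n, 1 ≤ n → ∀ x ∈ Set.Icc (0 : ℝ) 1, |S.g' n x| < α) {k : ℕ} (hk : 1 ≤ k)
    {ψ : ℝ → ℝ} (hC : 0 ≤ C) (h : InCone C ψ) : InCone (α * C) (fun x => ψ (S.g k x)) := by
  refine ⟨fun x hx => h.1 _ (S_mapsTo S hk hx), fun x hx y hy => ?_⟩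
  refine (h.2 _ (S_mapsTo S hk hx) _ (S_mapsTo S hk hy)).trans ?_
  have := h.1 _ (S_mapsTo S hk hy)
  refine mul_le_mul_of_nonneg_right (Real.exp_le_exp.2 ?_) this
  have := mul_le_mul_of_nonneg_left (g_contract S hα hk hx hy) hC
  linarith

/-! ### conformality of the Hausdorff measure -/

def clip (x : ℝ) : ℝ := max 0 (min 1 x)

lemma clip_mem (x : ℝ) : clip x ∈ Icc (0:ℝ) 1 := by
  constructor
  · exact le_max_left _ _
  · exact max_le zero_le_one (min_le_left _ _)

lemma clip_eq {x : ℝ} (hx : x ∈ Icc (0:ℝ) 1) : clip x = x := by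
  unfold clip; rw [min_eq_right hx.2, max_eq_right hx.1]

lemma clip_cont : Continuous clip := by unfold clip; fun_prop

lemma comp_clip_cont {f : ℝ → ℝ} (hf : ContinuousOn f (Icc (0:ℝ) 1)) :
    Continuous (fun x => f (clip x)) :=
  hf.comp_continuous clip_cont clip_mem

lemma hausdorff_image_le {f f' : ℝ → ℝ} {c h : ℝ} (hh : 0 ≤ h) (hc : 0 ≤ c)
    (hf : ∀ x ∈ Icc (0:ℝ) 1, HasDerivAt f (f' x) x)
    (hcone : InCone c (fun x => |f' x|)) {A : Set ℝ} (hA : A ⊆ Icc (0:ℝ) 1) :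
    μH[h] (f '' A) ≤ ∫⁻ x in A, ENNReal.ofReal (|f' (clip x)| ^ h) ∂μH[h] := by
  have hcont : Continuous (fun x => |f' (clip x)|) := comp_clip_cont hcone.continuousOn
  have hmeas : Measurable (fun x => ENNReal.ofReal (|f' (clip x)| ^ h)) :=
    ((hcont.rpow_const fun _ => Or.inr hh).measurable).ennreal_ofReal
  have main : ∀ r : ℝ, 0 < r → μH[h] (f '' A) ≤
      ENNReal.ofReal (Real.exp (2 * c * r) ^ h) *
        ∫⁻ x in A, ENNReal.ofReal (|f' (clip x)| ^ h) ∂μH[h] := by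
    intro r hr
    set P : ℤ → Set ℝ := fun i => Ico (i • r) ((i + 1) • r) with hP
    have hPU : ⋃ i, P i = univ := iUnion_Ico_zsmul hr
    have hdiam : ∀ i, ∀ x ∈ P i, ∀ y ∈ P i, |x - y| ≤ r := by
      intro i x hx y hy
      simp only [hP, add_smul, one_smul, mem_Ico] at hx hy
      rw [abs_le]; constructor <;> linarith [hx.1, hx.2, hy.1, hy.2]
    have piece : ∀ i, μH[h] (f '' (P i ∩ A)) ≤ ENNReal.ofReal (Real.exp (2 * c * r) ^ h) *
        ∫⁻ x in P i ∩ A, ENNReal.ofReal (|f' (clip x)| ^ h) ∂μH[h] := by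
      intro i
      rcases (P i ∩ A).eq_empty_or_nonempty with he | ⟨x₀, hx₀, hx₀A⟩
      · simp [he]
      have hx₀I := hA hx₀A
      set K : ℝ := Real.exp (c * r) * |f' x₀| with hK
      have hK0 : 0 ≤ K := by positivity
      have hlip : LipschitzOnWith K.toNNReal f (P i ∩ Icc (0:ℝ) 1) := by
        refine Convex.lipschitzOnWith_of_nnnorm_hasDerivWithin_le (f' := f')
          ((convex_Ico _ _).inter (convex_Icc _ _))
          (fun x hx => (hf x hx.2).hasDerivWithinAt) (fun x hx => ?_)
        rw [← NNReal.coe_le_coe, Real.coe_toNNReal _ hK0, coe_nnnorm, Real.norm_eq_abs]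
        refine (hcone.2 x hx.2 x₀ hx₀I).trans ?_
        have := hdiam i x hx.1 x₀ hx₀
        simp only [hK]
        gcongr
      have h1 := (hlip.mono (inter_subset_inter_right _ hA)).hausdorffMeasure_image_le hh
      refine h1.trans ?_
      rw [← lintegral_const_mul _ hmeas, ← setLIntegral_const]
      refine setLIntegral_mono (hmeas.const_mul _) fun x hx => ?_
      rw [← ENNReal.ofReal_mul (by positivity), ← Real.mul_rpow (by positivity) (by positivity),
        clip_eq (hA hx.2)]
      change (ENNReal.ofReal K) ^ h ≤ _
      rw [ENNReal.ofReal_rpow_of_nonneg hK0 hh]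
      refine ENNReal.ofReal_le_ofReal (Real.rpow_le_rpow hK0 ?_ hh)
      have e1 := hcone.2 x₀ hx₀I x (hA hx.2)
      have e2 := hdiam i x₀ hx₀ x hx.1
      simp only at e1
      calc K ≤ Real.exp (c * r) * (Real.exp (c * r) * |f' x|) := by
            rw [hK]
            gcongr
            refine e1.trans ?_
            gcongr
        _ = _ := by rw [← mul_assoc, ← Real.exp_add]; ring_nf
    have hAU : A = ⋃ i, (P i ∩ A) := by rw [← iUnion_inter, hPU, univ_inter]
    calc μH[h] (f '' A) = μH[h] (⋃ i, f '' (P i ∩ A)) := by rw [← image_iUnion, ← hAU]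
      _ ≤ ∑' i, μH[h] (f '' (P i ∩ A)) := measure_iUnion_le _
      _ ≤ ∑' i, ENNReal.ofReal (Real.exp (2 * c * r) ^ h) *
        ∫⁻ x in P i ∩ A, ENNReal.ofReal (|f' (clip x)| ^ h) ∂μH[h] := ENNReal.tsum_le_tsum piece
      _ = ENNReal.ofReal (Real.exp (2 * c * r) ^ h) * ∑' i,
          ∫⁻ x in P i, ENNReal.ofReal (|f' (clip x)| ^ h) ∂(μH[h].restrict A) := by
            rw [ENNReal.tsum_mul_left]
            congr 2
            ext i
            rw [Measure.restrict_restrict measurableSet_Ico]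
      _ = _ := by
            rw [← lintegral_iUnion (fun i => measurableSet_Ico) (pairwise_disjoint_Ico_zsmul r), hPU,
              Measure.restrict_univ]
  have hlim : Tendsto (fun r : ℝ => ENNReal.ofReal (Real.exp (2 * c * r) ^ h) *
        ∫⁻ x in A, ENNReal.ofReal (|f' (clip x)| ^ h) ∂μH[h]) (𝓝[>] 0)
      (𝓝 (1 * ∫⁻ x in A, ENNReal.ofReal (|f' (clip x)| ^ h) ∂μH[h])) := by
    refine ENNReal.Tendsto.mul_const ?_ (Or.inl one_ne_zero)
    have : Continuous (fun r : ℝ => ENNReal.ofReal (Real.exp (2 * c * r) ^ h)) := by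
      refine ENNReal.continuous_ofReal.comp ?_
      exact (by fun_prop : Continuous fun r : ℝ => Real.exp (2 * c * r)).rpow_const
        fun _ => Or.inr hh
    have := (this.tendsto 0).mono_left (nhdsWithin_le_nhds (s := Ioi 0))
    simpa using this
  rw [one_mul] at hlim
  refine ge_of_tendsto hlim ?_
  filter_upwards [self_mem_nhdsWithin] with r hr using main r hr

lemma conformal_lintegral (S : NonlinearIFS) {c : ℝ} (hc0 : 0 ≤ c)
    (hc : ∀ n, 1 ≤ n → ∀ x ∈ Set.Icc (0 : ℝ) 1, |S.g'' n x / S.g' n x| < c) {h : ℝ} (hh : 0 ≤ h)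
    (n : ℕ) {ψ : ℝ → ℝ} (hψ : ContinuousOn ψ (Icc (0:ℝ) 1)) :
    ∫⁻ x, ENNReal.ofReal (ψ (clip x)) ∂(μH[h].restrict (limitSet S.g n)) ≤
    ∑ k ∈ Finset.Icc 1 n, ∫⁻ x, ENNReal.ofReal (|S.g' k (clip x)| ^ h) *
      ENNReal.ofReal (ψ (S.g k (clip x))) ∂(μH[h].restrict (limitSet S.g n)) := by
  set J := limitSet S.g n with hJ
  set ν := (μH[h] : Measure ℝ).restrict J with hν
  have hJI : J ⊆ Icc (0:ℝ) 1 := limitSet_subset S n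
  have hGc : ∀ k ∈ Finset.Icc 1 n, Continuous (fun x => S.g k (clip x)) := fun k hk =>
    comp_clip_cont fun x hx => (S.deriv1 k (Finset.mem_Icc.1 hk).1 x hx).continuousAt.continuousWithinAt
  have hfm : ∀ k ∈ Finset.Icc 1 n, Measurable (fun x => ENNReal.ofReal (|S.g' k (clip x)| ^ h)) :=
    fun k hk => (((comp_clip_cont (deriv_inCone S hc (Finset.mem_Icc.1 hk).1).continuousOn).rpow_const
      fun _ => Or.inr hh).measurable).ennreal_ofReal
  have hψm : Measurable (fun x => ENNReal.ofReal (ψ (clip x))) :=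
    (comp_clip_cont hψ).measurable.ennreal_ofReal
  have hle : ν ≤ ∑ k ∈ Finset.Icc 1 n, Measure.map (fun x => S.g k (clip x))
      (ν.withDensity (fun x => ENNReal.ofReal (|S.g' k (clip x)| ^ h))) := by
    refine Measure.le_iff.2 fun E hE => ?_
    rw [Measure.finsetSum_apply, hν, Measure.restrict_apply hE]
    calc μH[h] (E ∩ J) ≤ μH[h] (⋃ k ∈ Finset.Icc 1 n, S.g k ''
          ((fun x => S.g k (clip x)) ⁻¹' E ∩ J)) := by
            refine measure_mono fun x hx => ?_
            have := limitSet_cover S n hx.2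
            simp only [mem_iUnion] at this ⊢
            obtain ⟨k, hk, y, hy, hyx⟩ := this
            refine ⟨k, hk, y, ⟨?_, hy⟩, hyx⟩
            rw [mem_preimage, clip_eq (hJI hy), hyx]
            exact hx.1
      _ ≤ ∑ k ∈ Finset.Icc 1 n, μH[h] (S.g k '' ((fun x => S.g k (clip x)) ⁻¹' E ∩ J)) :=
            measure_biUnion_finset_le _ _
      _ ≤ _ := by
            refine Finset.sum_le_sum fun k hk => ?_
            have hEm := (hGc k hk).measurable hE
            rw [Measure.map_apply (hGc k hk).measurable hE, withDensity_apply _ hEm,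
              Measure.restrict_restrict hEm]
            have hk1 := (Finset.mem_Icc.1 hk).1
            exact hausdorff_image_le hh hc0 (S.deriv1 k hk1) (deriv_inCone S hc hk1)
              (inter_subset_right.trans hJI)
  refine (lintegral_mono' hle le_rfl).trans ?_
  rw [lintegral_finsetSum_measure]
  refine Finset.sum_le_sum fun k hk => ?_
  have hcm : Measurable (fun x => ENNReal.ofReal (ψ (clip (S.g k (clip x))))) :=
    hψm.comp (hGc k hk).measurable
  rw [lintegral_map hψm (hGc k hk).measurable,
    lintegral_withDensity_eq_lintegral_mul _ (hfm k hk) hcm]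
  refine lintegral_mono fun x => ?_
  simp only [Pi.mul_apply]
  rw [clip_eq (S_mapsTo S (Finset.mem_Icc.1 hk).1 (clip_mem x))]

lemma conformal_real (S : NonlinearIFS) {c : ℝ} (hc0 : 0 ≤ c)
    (hc : ∀ n, 1 ≤ n → ∀ x ∈ Set.Icc (0 : ℝ) 1, |S.g'' n x / S.g' n x| < c) {h : ℝ} (hh : 0 ≤ h)
    (n : ℕ) (r : ENNReal) (m : Measure ℝ) [IsFiniteMeasure m]
    (hm : m = r • (μH[h] : Measure ℝ).restrict (limitSet S.g n))
    {C : ℝ} {ψ : ℝ → ℝ} (hψ : InCone C ψ) :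
    ∫ x in Icc (0:ℝ) 1, ψ x ∂m ≤
      ∫ x in Icc (0:ℝ) 1, ∑ k ∈ Finset.Icc 1 n, |S.g' k x| ^ h * ψ (S.g k x) ∂m := by
  have hres : m.restrict (Icc (0:ℝ) 1) = m := by
    rw [hm, Measure.restrict_smul, Measure.restrict_restrict measurableSet_Icc,
      inter_eq_right.2 (limitSet_subset S n)]
  have hcont : ContinuousOn (fun x => ∑ k ∈ Finset.Icc 1 n, |S.g' k x| ^ h * ψ (S.g k x))
      (Icc (0:ℝ) 1) := by
    refine continuousOn_finsetSum _ fun k hk => ?_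
    have hk1 := (Finset.mem_Icc.1 hk).1
    refine ((deriv_inCone S hc hk1).continuousOn.rpow_const fun _ _ => Or.inr hh).mul ?_
    refine hψ.continuousOn.comp (fun x hx => ?_) fun x hx => S_mapsTo S hk1 hx
    exact (S.deriv1 k hk1 x hx).continuousAt.continuousWithinAt
  have hnn : ∀ x ∈ Icc (0:ℝ) 1, 0 ≤ ∑ k ∈ Finset.Icc 1 n, |S.g' k x| ^ h * ψ (S.g k x) := by
    intro x hx
    refine Finset.sum_nonneg fun k hk => mul_nonneg (by positivity) ?_
    exact hψ.1 _ (S_mapsTo S (Finset.mem_Icc.1 hk).1 hx)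
  have hR := hnn
  rw [← ENNReal.ofReal_le_ofReal_iff (setIntegral_nonneg measurableSet_Icc hnn),
    ofReal_integral_eq_lintegral_ofReal (hψ.integrableOn m)
      (by filter_upwards [ae_restrict_mem measurableSet_Icc] with x hx using hψ.1 x hx),
    ofReal_integral_eq_lintegral_ofReal (hcont.integrableOn_compact isCompact_Icc)
      (by filter_upwards [ae_restrict_mem measurableSet_Icc] with x hx using hnn x hx)]
  have e1 : ∫⁻ x in Icc (0:ℝ) 1, ENNReal.ofReal (ψ x) ∂m =
      ∫⁻ x, ENNReal.ofReal (ψ (clip x)) ∂m := by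
    conv_rhs => rw [← hres]
    refine setLIntegral_congr_fun measurableSet_Icc fun x hx => ?_
    simp only [clip_eq hx]
  have e2 : ∫⁻ x in Icc (0:ℝ) 1, ENNReal.ofReal
        (∑ k ∈ Finset.Icc 1 n, |S.g' k x| ^ h * ψ (S.g k x)) ∂m =
      ∫⁻ x, ∑ k ∈ Finset.Icc 1 n, ENNReal.ofReal (|S.g' k (clip x)| ^ h) *
        ENNReal.ofReal (ψ (S.g k (clip x))) ∂m := by
    conv_rhs => rw [← hres]
    refine setLIntegral_congr_fun measurableSet_Icc fun x hx => ?_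
    simp only [clip_eq hx]
    rw [ENNReal.ofReal_sum_of_nonneg]
    · exact Finset.sum_congr rfl fun k hk => ENNReal.ofReal_mul (by positivity)
    · intro k hk
      exact mul_nonneg (by positivity) (hψ.1 _ (S_mapsTo S (Finset.mem_Icc.1 hk).1 hx))
  have hmeas : ∀ k ∈ Finset.Icc 1 n, Measurable (fun x => ENNReal.ofReal (|S.g' k (clip x)| ^ h) *
        ENNReal.ofReal (ψ (S.g k (clip x)))) := by
    intro k hk
    have hk1 := (Finset.mem_Icc.1 hk).1
    apply Measurable.fun_mul
    · exact (((comp_clip_cont (deriv_inCone S hc hk1).continuousOn).rpow_const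
        fun _ => Or.inr hh).measurable).ennreal_ofReal
    · refine Measurable.ennreal_ofReal (Continuous.measurable ?_)
      refine hψ.continuousOn.comp_continuous (comp_clip_cont (f := S.g k) fun x hx => ?_)
        fun x => S_mapsTo S hk1 (clip_mem x)
      exact (S.deriv1 k hk1 x hx).continuousAt.continuousWithinAt
  rw [e1, e2, lintegral_finsetSum _ hmeas, hm, lintegral_smul_measure]
  simp_rw [lintegral_smul_measure]
  rw [← Finset.smul_sum]
  exact smul_le_smul_of_nonneg_left (conformal_lintegral S hc0 hc hh n hψ.continuousOn) (by simp)

/-! ### Lebesgue measure -/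

lemma lebesgue_sum_le (S : NonlinearIFS) (n : ℕ) {C : ℝ} {ψ : ℝ → ℝ} (hψ : InCone C ψ) :
    ∑ k ∈ Finset.Icc 1 n, ∫ x in Icc (0:ℝ) 1, |S.g' k x| * ψ (S.g k x) ≤
      ∫ x in Icc (0:ℝ) 1, ψ x := by
  have hb0 : ∀ k, 0 ≤ S.b k := S.b_anti.antitone.le_of_tendsto S.b_lim
  have hb1 : ∀ k, S.b k ≤ 1 := fun k => by
    rw [← S.b_zero]; exact S.b_anti.antitone (Nat.zero_le _)
  have hint := hψ.integrableOn volume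
  have key : ∀ n, ∑ k ∈ Finset.Icc 1 n, ∫ x in Icc (0:ℝ) 1, |S.g' k x| * ψ (S.g k x) =
      ∫ x in Ioc (S.b n) 1, ψ x := by
    intro n
    induction n with
    | zero => simp [S.b_zero]
    | succ n ih =>
      rw [Finset.sum_Icc_succ_top (by omega), ih]
      have h1 := integral_image_eq_integral_abs_deriv_smul (f := S.g (n + 1)) (f' := S.g' (n + 1))
        measurableSet_Icc
        (fun x hx => (S.deriv1 (n + 1) (by omega) x hx).hasDerivWithinAt)
        (S.g_anti (n + 1) (by omega)).injOn ψ
      simp only [smul_eq_mul] at h1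
      rw [← h1, S.g_image (n + 1) (by omega), Nat.add_sub_cancel, integral_Icc_eq_integral_Ioc]
      have hlt : S.b (n + 1) ≤ S.b n := S.b_anti.antitone (by omega)
      rw [← Ioc_union_Ioc_eq_Ioc hlt (hb1 n), setIntegral_union, add_comm]
      · exact Ioc_disjoint_Ioc_of_le le_rfl
      · exact measurableSet_Ioc
      · exact hint.mono_set fun x hx => ⟨(hb0 _).trans hx.1.le, hx.2.trans (hb1 _)⟩
      · exact hint.mono_set fun x hx => ⟨(hb0 _).trans hx.1.le, hx.2⟩
  rw [key]
  refine setIntegral_mono_set hint ?_ ?_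
  · filter_upwards [ae_restrict_mem measurableSet_Icc] with x hx using hψ.1 x hx
  · exact Eventually.of_forall fun x hx => ⟨(hb0 _).trans hx.1.le, hx.2⟩

/-! ### contraction estimate -/

lemma rpow_bound {a h : ℝ} {N : ℝ} (ha : 0 ≤ a) (hh0 : 0 ≤ h) (hh1 : h ≤ 1) (hN : 1 ≤ N) :
    a ^ h ≤ N ^ (2 * (1 - h)) * a + N ^ (-(2 * h)) := by
  have hN0 : 0 < N := by linarith
  rcases le_or_gt a (N ^ (-2 : ℝ)) with h1 | h1
  · have : a ^ h ≤ N ^ (-(2 * h)) := by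
      have := Real.rpow_le_rpow ha h1 hh0
      rw [← Real.rpow_mul hN0.le] at this
      convert this using 2; ring
    have : 0 ≤ N ^ (2 * (1 - h)) * a := by positivity
    linarith
  · have hap : 0 < a := lt_trans (by positivity) h1
    have e : a ^ h = a ^ (-(1 - h)) * a := by
      nth_rw 3 [← Real.rpow_one a]
      rw [← Real.rpow_add hap]; congr 1; ring
    have : a ^ (-(1 - h)) ≤ N ^ (2 * (1 - h)) := by
      have := Real.rpow_le_rpow_of_nonpos (by positivity) h1.le (by linarith : -(1 - h) ≤ 0)
      rw [← Real.rpow_mul hN0.le] at this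
      refine this.trans (le_of_eq ?_)
      congr 1; ring
    have h2 : a ^ (-(1 - h)) * a ≤ N ^ (2 * (1 - h)) * a := by gcongr
    have : 0 ≤ N ^ (-(2 * h)) := by positivity
    linarith

lemma core (S : NonlinearIFS) {c α C : ℝ} (hc0 : 0 < c) (hα0 : 0 ≤ α)
    (hc : ∀ n, 1 ≤ n → ∀ x ∈ Set.Icc (0 : ℝ) 1, |S.g'' n x / S.g' n x| < c)
    (hα : ∀ n, 1 ≤ n → ∀ x ∈ Set.Icc (0 : ℝ) 1, |S.g' n x| < α)
    (hC0 : 0 < C) (hC : c + α * C < C) {h : ℝ} (hh0 : 0 ≤ h) (hh1 : h ≤ 1) {n : ℕ} (hn : 1 ≤ n)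
    (m : Measure ℝ) [IsProbabilityMeasure m] (hmI : m.real (Icc (0:ℝ) 1) = 1)
    (hconf : ∀ ψ, InCone C ψ → ∫ x in Icc (0:ℝ) 1, ψ x ∂m ≤
      ∫ x in Icc (0:ℝ) 1, ∑ k ∈ Finset.Icc 1 n, |S.g' k x| ^ h * ψ (S.g k x) ∂m)
    {p q A B Λ₁ : ℝ} (hp : ∀ x ∈ Icc (0:ℝ) 1, p ≤ |S.g' 1 x|)
    (hq : q = (1 - (c + α * C) / C) * (p * Real.exp (-C)))
    (hA : A = (n : ℝ) ^ (2 * (1 - h))) (hB : B = n * (n : ℝ) ^ (-(2 * h)) * Real.exp C)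
    (hpos : 0 < 1 - A * (1 - q)) (hΛ₁ : A * q + B ≤ Λ₁ * (1 - A * (1 - q)))
    {ψ : ℝ → ℝ} (hψ : InCone C ψ) :
    ∫ x in Icc (0:ℝ) 1, ψ x ∂m ≤ Λ₁ * ∫ x in Icc (0:ℝ) 1, ψ x := by
  set C' := c + α * C with hC'
  have hC'0 : 0 ≤ C' := by positivity
  have hr0 : 0 ≤ 1 - C' / C := by
    rw [sub_nonneg, div_le_one hC0]; exact hC.le
  have hn1 : (1:ℝ) ≤ n := by exact_mod_cast hn
  have hA0 : 0 ≤ A := by rw [hA]; positivity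
  set P : Set ℝ := {Λ | 0 ≤ Λ ∧ ∀ ψ, InCone C ψ →
    ∫ x in Icc (0:ℝ) 1, ψ x ∂m ≤ Λ * ∫ x in Icc (0:ℝ) 1, ψ x} with hP
  have hPne : P.Nonempty := by
    refine ⟨Real.exp C, (Real.exp_pos _).le, fun ψ hψ => ?_⟩
    have : ∫ x in Icc (0:ℝ) 1, ψ x ∂m ≤
        ∫ x in Icc (0:ℝ) 1, (Real.exp C * ∫ x in Icc (0:ℝ) 1, ψ x) ∂m :=
      setIntegral_mono_on (hψ.integrableOn m) (integrable_const _) measurableSet_Icc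
        fun y hy => hψ.le_integral hC0.le hy
    simpa [hmI] using this
  have hPbdd : BddBelow P := ⟨0, fun x hx => hx.1⟩
  set Λ := sInf P with hΛ
  have hΛP : Λ ∈ P := by
    refine IsClosed.csInf_mem ?_ hPne hPbdd
    have : P = Ici 0 ∩ ⋂ ψ, ⋂ (_ : InCone C ψ),
        {Λ | ∫ x in Icc (0:ℝ) 1, ψ x ∂m ≤ Λ * ∫ x in Icc (0:ℝ) 1, ψ x} := by
      ext x; simp [hP]
    rw [this]
    refine isClosed_Ici.inter (isClosed_iInter fun ψ => isClosed_iInter fun _ => ?_)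
    exact isClosed_le continuous_const (by fun_prop)
  have step : ∀ ψ, InCone C ψ → ∫ x in Icc (0:ℝ) 1, ψ x ∂m ≤
      (A * (q + Λ * (1 - q)) + B) * ∫ x in Icc (0:ℝ) 1, ψ x := by
    intro ψ hψ
    set I := ∫ x in Icc (0:ℝ) 1, ψ x with hI
    have hI0 : 0 ≤ I := hψ.integral_nonneg volume
    set u : ℝ → ℝ := fun x => ∑ k ∈ Finset.Icc 1 n, |S.g' k x| * ψ (S.g k x) with hu
    have hterm : ∀ k ∈ Finset.Icc 1 n, InCone C' (fun x => |S.g' k x| * ψ (S.g k x)) :=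
      fun k hk => (deriv_inCone S hc (Finset.mem_Icc.1 hk).1).mul
        (comp_inCone S hα (Finset.mem_Icc.1 hk).1 hC0.le hψ)
    have hucone : InCone C' u := InCone.sum _ hterm
    have hθ : ∫ x in Icc (0:ℝ) 1, u x ≤ I := by
      rw [integral_finsetSum _ fun k hk => (hterm k hk).integrableOn volume]
      exact lebesgue_sum_le S n hψ
    have hulow : ∀ x ∈ Icc (0:ℝ) 1, p * (Real.exp (-C) * I) ≤ u x := by
      intro x hx
      have h1 : |S.g' 1 x| * ψ (S.g 1 x) ≤ u x :=
        Finset.single_le_sum (f := fun k => |S.g' k x| * ψ (S.g k x))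
          (fun k hk => (hterm k hk).1 x hx) (Finset.mem_Icc.2 ⟨le_rfl, hn⟩)
      refine le_trans ?_ h1
      have h2 := hψ.integral_le hC0.le (S_mapsTo S le_rfl hx)
      exact mul_le_mul (hp x hx) h2 (by positivity) (abs_nonneg _)
    have hsub : InCone C (fun x => u x - q * I) := by
      refine hucone.sub_const hC'0 hC fun x hx => ?_
      calc q * I = (1 - C' / C) * (p * (Real.exp (-C) * I)) := by rw [hq]; ring
        _ ≤ _ := mul_le_mul_of_nonneg_left (hulow x hx) hr0
    have hum : ∫ x in Icc (0:ℝ) 1, u x ∂m ≤ I * (q + Λ * (1 - q)) := by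
      have h1 := hΛP.2 _ hsub
      rw [integral_sub (hucone.integrableOn m) (integrable_const _),
        integral_sub (hucone.integrableOn volume) (integrable_const _)] at h1
      simp only [integral_const, measureReal_restrict_apply_univ, hmI, smul_eq_mul, one_mul,
        Real.volume_real_Icc, sub_zero, zero_le_one, sup_of_le_left] at h1
      have h2 := mul_le_mul_of_nonneg_left hθ hΛP.1
      nlinarith
    have hpt : ∀ x ∈ Icc (0:ℝ) 1, ∑ k ∈ Finset.Icc 1 n, |S.g' k x| ^ h * ψ (S.g k x) ≤
        A * u x + B * I := by
      intro x hx
      have : ∀ k ∈ Finset.Icc 1 n, |S.g' k x| ^ h * ψ (S.g k x) ≤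
          A * (|S.g' k x| * ψ (S.g k x)) + (n : ℝ) ^ (-(2 * h)) * (Real.exp C * I) := by
        intro k hk
        have hk1 := (Finset.mem_Icc.1 hk).1
        have h1 := rpow_bound (abs_nonneg (S.g' k x)) hh0 hh1 hn1
        have h2 := hψ.1 _ (S_mapsTo S hk1 hx)
        have h3 := hψ.le_integral hC0.le (S_mapsTo S hk1 hx)
        have h4 := mul_le_mul_of_nonneg_right h1 h2
        have h5 : (n : ℝ) ^ (-(2 * h)) * ψ (S.g k x) ≤ (n : ℝ) ^ (-(2 * h)) * (Real.exp C * I) := by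
          gcongr
        rw [hA]
        linarith
      refine (Finset.sum_le_sum this).trans (le_of_eq ?_)
      rw [Finset.sum_add_distrib, ← Finset.mul_sum, Finset.sum_const, Nat.card_Icc, hB]
      simp only [Nat.add_sub_cancel, nsmul_eq_mul, hu]
      ring
    have hintR : IntegrableOn (fun x => A * u x + B * I) (Icc (0:ℝ) 1) m :=
      ((hucone.integrableOn m).const_mul A).add (integrable_const _)
    have hle : ∫ x in Icc (0:ℝ) 1, ∑ k ∈ Finset.Icc 1 n, |S.g' k x| ^ h * ψ (S.g k x) ∂m ≤
        ∫ x in Icc (0:ℝ) 1, (A * u x + B * I) ∂m := by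
      refine integral_mono_of_nonneg ?_ hintR ?_
      · filter_upwards [ae_restrict_mem measurableSet_Icc] with x hx
        refine Finset.sum_nonneg fun k hk => mul_nonneg (by positivity) ?_
        exact hψ.1 _ (S_mapsTo S (Finset.mem_Icc.1 hk).1 hx)
      · filter_upwards [ae_restrict_mem measurableSet_Icc] with x hx using hpt x hx
    rw [integral_add ((hucone.integrableOn m).const_mul A) (integrable_const _),
      integral_const_mul] at hle
    simp only [integral_const, measureReal_restrict_apply_univ, hmI, smul_eq_mul, one_mul] at hle
    have h6 := mul_le_mul_of_nonneg_left hum hA0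
    have h7 := hconf ψ hψ
    linarith
  have hΛ2 : A * (q + Λ * (1 - q)) + B ∈ P ∨ A * (q + Λ * (1 - q)) + B < 0 := by
    rcases le_or_gt 0 (A * (q + Λ * (1 - q)) + B) with h | h
    · exact Or.inl ⟨h, step⟩
    · exact Or.inr h
  have hΛle : Λ ≤ A * (q + Λ * (1 - q)) + B := by
    rcases hΛ2 with h | h
    · exact csInf_le hPbdd h
    · exfalso
      have h1 : InCone C (fun _ => 1) := by
        refine ⟨fun _ _ => zero_le_one, fun x _ y _ => ?_⟩
        rw [mul_one]; exact Real.one_le_exp (by positivity)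
      have h2 := step _ h1
      simp [hmI] at h2
      linarith
  have hfin : Λ ≤ Λ₁ := by
    have : Λ * (1 - A * (1 - q)) ≤ Λ₁ * (1 - A * (1 - q)) := by linarith
    exact le_of_mul_le_mul_right this hpos
  exact (hΛP.2 ψ hψ).trans (mul_le_mul_of_nonneg_right hfin (hψ.integral_nonneg volume))

/-! ### test functions -/

def bump (C s t x : ℝ) : ℝ := Real.exp (-(C * max 0 (max (s - x) (x - t))))

lemma bump_inCone {C s t : ℝ} (hC : 0 ≤ C) : InCone C (bump C s t) := by
  refine ⟨fun x _ => (Real.exp_pos _).le, fun x _ y _ => ?_⟩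
  unfold bump
  rw [← Real.exp_add, Real.exp_le_exp]
  have h1 : max 0 (max (s - y) (y - t)) ≤ |x - y| + max 0 (max (s - x) (x - t)) := by
    have a1 := le_abs_self (x - y)
    have a2 := neg_abs_le (x - y)
    have a3 := le_max_left 0 (max (s - x) (x - t))
    have a4 := (le_max_left (s - x) (x - t)).trans (le_max_right 0 _)
    have a5 := (le_max_right (s - x) (x - t)).trans (le_max_right 0 _)
    refine max_le (by positivity) (max_le ?_ ?_) <;> linarith
  have := mul_le_mul_of_nonneg_left h1 hC
  linarith

lemma bump_integral {C s t η : ℝ} (hC : 0 ≤ C) (hη : 0 < η) (hst : s ≤ t) :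
    ∫ x in Icc (0:ℝ) 1, bump C s t x ≤ (t - s + 2 * η) + Real.exp (-(C * η)) := by
  have hint : Integrable ((Icc (s - η) (t + η)).indicator (fun _ => (1:ℝ))) volume :=
    (integrable_indicator_iff measurableSet_Icc).2 (integrable_const _)
  have h1 : ∫ x in Icc (0:ℝ) 1, bump C s t x ≤ ∫ x in Icc (0:ℝ) 1,
      ((Icc (s - η) (t + η)).indicator (fun _ => (1:ℝ)) x + Real.exp (-(C * η))) := by
    refine setIntegral_mono_on ((bump_inCone hC).integrableOn volume)
      (hint.integrableOn.add (integrable_const _)) measurableSet_Icc fun x _ => ?_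
    by_cases hx : x ∈ Icc (s - η) (t + η)
    · rw [indicator_of_mem hx]
      have : bump C s t x ≤ 1 := by
        unfold bump
        rw [Real.exp_le_one_iff]
        have : 0 ≤ C * max 0 (max (s - x) (x - t)) := by positivity
        linarith
      have := Real.exp_pos (-(C * η))
      linarith
    · rw [indicator_of_notMem hx, zero_add]
      unfold bump
      rw [Real.exp_le_exp, neg_le_neg_iff]
      refine mul_le_mul_of_nonneg_left ?_ hC
      by_contra hlt
      rw [not_le, max_lt_iff, max_lt_iff] at hlt
      exact hx ⟨by linarith [hlt.2.1], by linarith [hlt.2.2]⟩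
  have h2 : ∫ x in Icc (0:ℝ) 1, (Icc (s - η) (t + η)).indicator (fun _ => (1:ℝ)) x ≤
      t - s + 2 * η := by
    refine (setIntegral_le_integral hint ?_).trans ?_
    · exact Eventually.of_forall fun x => indicator_nonneg (fun _ _ => zero_le_one) x
    · rw [integral_indicator measurableSet_Icc]
      simp only [integral_const, measureReal_restrict_apply_univ, Real.volume_real_Icc, smul_eq_mul,
        mul_one]
      exact max_le (by linarith) (by linarith)
  rw [integral_add hint.integrableOn (integrable_const _)] at h1
  simp only [integral_const, measureReal_restrict_apply_univ, Real.volume_real_Icc, smul_eq_mul,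
    one_mul, sub_zero, zero_le_one, sup_of_le_left] at h1
  linarith

lemma h_le_one (S : NonlinearIFS) {n : ℕ} (hn : 1 ≤ n) : S.h n ≤ 1 := by
  have h1 : dimH (limitSet S.g n) ≤ 1 := by
    rw [← Real.dimH_univ]; exact dimH_mono (subset_univ _)
  rw [S.h_dim n hn] at h1
  exact ENNReal.ofReal_le_one.1 h1

lemma log_nat_tendsto : Tendsto (fun n : ℕ => Real.log n) atTop atTop :=
  Real.tendsto_log_atTop.comp tendsto_natCast_atTop_atTop

lemma A_tendsto (S : NonlinearIFS) :
    Tendsto (fun n : ℕ => (n : ℝ) ^ (2 * (1 - S.h n))) atTop (𝓝 1) := by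
  have h1 : Tendsto (fun n : ℕ => Real.exp (2 * ((1 - S.h n) * Real.log n))) atTop (𝓝 1) := by
    have := (S.N1.const_mul 2)
    have := (Real.continuous_exp.tendsto _).comp this
    rw [mul_zero, Real.exp_zero] at this
    exact this
  refine h1.congr' ?_
  filter_upwards [eventually_ge_atTop 1] with n hn
  have : (0:ℝ) < n := by exact_mod_cast hn
  rw [Real.rpow_def_of_pos this]; congr 1; ring

lemma B_tendsto (S : NonlinearIFS) (C : ℝ) :
    Tendsto (fun n : ℕ => (n : ℝ) * (n : ℝ) ^ (-(2 * S.h n)) * Real.exp C) atTop (𝓝 0) := by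
  have h1 : Tendsto (fun n : ℕ => Real.exp (2 * ((1 - S.h n) * Real.log n) + - Real.log n))
      atTop (𝓝 0) := by
    refine Real.tendsto_exp_atBot.comp ?_
    exact (S.N1.const_mul 2).add_atBot (tendsto_neg_atTop_atBot.comp log_nat_tendsto)
  have h2 := h1.mul_const (Real.exp C)
  rw [zero_mul] at h2
  refine h2.congr' ?_
  filter_upwards [eventually_ge_atTop 1] with n hn
  have : (0:ℝ) < n := by exact_mod_cast hn
  rw [Real.rpow_def_of_pos this]
  congr 1
  conv_rhs => rw [← Real.exp_log this]
  rw [← Real.exp_add, Real.log_exp]; congr 1; ring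

lemma h_pos (S : NonlinearIFS) : ∀ᶠ n in atTop, 0 < S.h n := by
  filter_upwards [S.N1.eventually (gt_mem_nhds (zero_lt_one)),
    log_nat_tendsto.eventually (eventually_ge_atTop 1)] with n h1 h2
  by_contra h
  nlinarith

/-- In the nonlinear setting, for every `δ > 0` and `ε > 0`, the density of every closed
    interval `Δ ⊆ [0,1]` of length `≥ δ` is eventually at most `1 + ε`. -/
theorem nonlinear_density_long_intervals (S : NonlinearIFS) :
    ∀ δ > (0 : ℝ), ∀ ε > (0 : ℝ), ∃ n₀ : ℕ, ∀ n ≥ n₀, ∀ s t : ℝ,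
      0 ≤ s → s ≤ t → t ≤ 1 → δ ≤ t - s →
      normMeas S n (Set.Icc s t) / ENNReal.ofReal ((t - s) ^ S.h n) ≤
        ENNReal.ofReal (1 + ε) := by
  intro δ hδ ε hε
  obtain ⟨c, hc0, hc⟩ := S.N3
  obtain ⟨α, hα1, hα⟩ := S.N5
  have h0I : (0:ℝ) ∈ Icc (0:ℝ) 1 := ⟨le_rfl, zero_le_one⟩
  have hα0 : 0 ≤ α := ((abs_nonneg _).trans_lt (hα 1 le_rfl 0 h0I)).le
  set e := min ε 1 / 4 with he
  have he0 : 0 < e := by positivity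
  have heε : (1 + e) * (1 + e) ≤ 1 + ε := by
    have h1 : min ε 1 ≤ ε := min_le_left _ _
    have h2 : min ε 1 ≤ 1 := min_le_right _ _
    nlinarith
  set η := e * δ / 4 with hη
  have hη0 : 0 < η := by positivity
  set τ := e * δ / 2 with hτ
  have hτ0 : 0 < τ := by positivity
  set C := max (c / (1 - α) + 1) (-Real.log τ / η) with hCdef
  have hα1' : 0 < 1 - α := by linarith
  have hC1 : c / (1 - α) + 1 ≤ C := le_max_left _ _
  have hC2 : -Real.log τ / η ≤ C := le_max_right _ _
  have hC0 : 0 < C := lt_of_lt_of_le (by positivity) hC1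
  have hC : c + α * C < C := by
    have : c / (1 - α) < C := by linarith
    rw [div_lt_iff₀ hα1'] at this
    linarith
  have hexp : Real.exp (-(C * η)) ≤ τ := by
    rw [← Real.le_log_iff_exp_le hτ0]
    rw [div_le_iff₀ hη0] at hC2
    linarith
  set p := Real.exp (-c) * |S.g' 1 0| with hp
  have hp0 : 0 < p := mul_pos (Real.exp_pos _) (abs_pos.2 (S.deriv_ne 1 le_rfl 0 h0I))
  have hpb : ∀ x ∈ Icc (0:ℝ) 1, p ≤ |S.g' 1 x| := by
    intro x hx
    rw [hp, Real.exp_neg, inv_mul_le_iff₀ (Real.exp_pos _)]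
    refine ((deriv_inCone S hc le_rfl).2 0 h0I x hx).trans ?_
    refine mul_le_mul_of_nonneg_right (Real.exp_le_exp.2 ?_) (abs_nonneg _)
    have : |0 - x| ≤ 1 := by rw [abs_le]; constructor <;> linarith [hx.1, hx.2]
    nlinarith
  set q := (1 - (c + α * C) / C) * (p * Real.exp (-C)) with hq
  have hq0 : 0 < q := by
    refine mul_pos ?_ (by positivity)
    rw [sub_pos, div_lt_one hC0]; exact hC
  have hA := A_tendsto S
  have hB := B_tendsto S C
  have hD : Tendsto (fun n : ℕ => 1 - (n : ℝ) ^ (2 * (1 - S.h n)) * (1 - q)) atTop (𝓝 q) := by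
    have := (hA.mul_const (1 - q)).const_sub 1
    simpa using this
  have hE : Tendsto (fun n : ℕ => (1 + e) * (1 - (n : ℝ) ^ (2 * (1 - S.h n)) * (1 - q)) -
      ((n : ℝ) ^ (2 * (1 - S.h n)) * q + (n : ℝ) * (n : ℝ) ^ (-(2 * S.h n)) * Real.exp C))
      atTop (𝓝 (e * q)) := by
    have := (hD.const_mul (1 + e)).sub ((hA.mul_const q).add hB)
    convert this using 2; ring
  have hev : ∀ᶠ n : ℕ in atTop, 1 ≤ n ∧ 0 < S.h n ∧
      0 < 1 - (n : ℝ) ^ (2 * (1 - S.h n)) * (1 - q) ∧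
      0 < (1 + e) * (1 - (n : ℝ) ^ (2 * (1 - S.h n)) * (1 - q)) -
      ((n : ℝ) ^ (2 * (1 - S.h n)) * q + (n : ℝ) * (n : ℝ) ^ (-(2 * S.h n)) * Real.exp C) :=
    (eventually_ge_atTop 1).and ((h_pos S).and ((hD.eventually (lt_mem_nhds hq0)).and
      (hE.eventually (lt_mem_nhds (by positivity)))))
  obtain ⟨n₀, hn₀⟩ := eventually_atTop.1 hev
  refine ⟨n₀, fun n hn s t hs hst ht hδst => ?_⟩
  obtain ⟨hn1, hh0, hpos, hfin⟩ := hn₀ n hn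
  have hh1 := h_le_one S hn1
  set J := limitSet S.g n with hJ
  set H := (μH[S.h n] : Measure ℝ) J with hH
  have hts : 0 < t - s := by linarith
  by_cases hH0 : H = 0
  · have : normMeas S n (Icc s t) = 0 := by
      unfold normMeas
      rw [measure_mono_null inter_subset_right hH0, ENNReal.zero_div]
    rw [this, ENNReal.zero_div]; exact zero_le
  by_cases hHt : H = ⊤
  · have : normMeas S n (Icc s t) = 0 := by
      unfold normMeas
      rw [← hJ, ← hH, hHt, ENNReal.div_top]
    rw [this, ENNReal.zero_div]; exact zero_le
  set m : Measure ℝ := H⁻¹ • (μH[S.h n] : Measure ℝ).restrict J with hm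
  have hJI : J ⊆ Icc (0:ℝ) 1 := limitSet_subset S n
  have hprob : IsProbabilityMeasure m := by
    refine ⟨?_⟩
    rw [hm, Measure.smul_apply, Measure.restrict_apply_univ, smul_eq_mul]
    exact ENNReal.inv_mul_cancel hH0 hHt
  have hmI : m.real (Icc (0:ℝ) 1) = 1 := by
    rw [Measure.real, hm, Measure.smul_apply, Measure.restrict_apply measurableSet_Icc,
      inter_eq_right.2 hJI, smul_eq_mul, ENNReal.inv_mul_cancel hH0 hHt, ENNReal.toReal_one]
  have hcore := core S hc0 hα0 hc hα hC0 hC hh0.le hh1 hn1 m hmI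
    (fun ψ hψ => conformal_real S hc0.le hc hh0.le n H⁻¹ m hm hψ) hpb hq rfl rfl hpos
    (Λ₁ := 1 + e) (by linarith) (bump_inCone (s := s) (t := t) hC0.le)
  have hbi := bump_integral (s := s) (t := t) hC0.le hη0 hst
  have hsub : Icc s t ⊆ Icc (0:ℝ) 1 := Icc_subset_Icc hs ht
  have hmreal : m.real (Icc s t) ≤ ∫ x in Icc (0:ℝ) 1, bump C s t x ∂m := by
    have h1 : ∫ x in Icc s t, (1:ℝ) ∂m ≤ ∫ x in Icc s t, bump C s t x ∂m := by
      refine setIntegral_mono_on (integrable_const _)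
        (((bump_inCone hC0.le).integrableOn m).mono_set hsub) measurableSet_Icc fun x hx => ?_
      unfold bump
      rw [max_eq_left (max_le (by linarith [hx.1]) (by linarith [hx.2]))]
      simp
    have h2 : ∫ x in Icc s t, bump C s t x ∂m ≤ ∫ x in Icc (0:ℝ) 1, bump C s t x ∂m := by
      refine setIntegral_mono_set ((bump_inCone hC0.le).integrableOn m) ?_
        (Eventually.of_forall hsub)
      exact Eventually.of_forall fun x => (Real.exp_pos _).le
    simp only [integral_const, measureReal_restrict_apply_univ, smul_eq_mul, mul_one] at h1
    exact h1.trans h2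
  have hbound : m.real (Icc s t) ≤ (1 + ε) * (t - s) ^ S.h n := by
    have h1 : ∫ x in Icc (0:ℝ) 1, bump C s t x ≤ (1 + e) * (t - s) := by
      have : e * δ ≤ e * (t - s) := by gcongr
      linarith
    have h2 : t - s ≤ (t - s) ^ S.h n := by
      have := Real.rpow_le_rpow_of_exponent_ge hts (by linarith) hh1
      rwa [Real.rpow_one] at this
    calc m.real (Icc s t) ≤ (1 + e) * ((1 + e) * (t - s)) :=
          hmreal.trans (hcore.trans (mul_le_mul_of_nonneg_left h1 (by linarith)))
      _ = ((1 + e) * (1 + e)) * (t - s) := by ring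
      _ ≤ (1 + ε) * (t - s) ^ S.h n := by gcongr
  have hnm : normMeas S n (Icc s t) = m (Icc s t) := by
    unfold normMeas
    rw [hm, Measure.smul_apply, Measure.restrict_apply measurableSet_Icc, smul_eq_mul,
      ENNReal.div_eq_inv_mul]
  rw [hnm, ← ENNReal.ofReal_toReal (measure_ne_top m (Icc s t))]
  refine ENNReal.div_le_of_le_mul ?_
  rw [← ENNReal.ofReal_mul (by linarith)]
  exact ENNReal.ofReal_le_ofReal hbound
end
end

section
/- In the nonlinear setting with standing conditions (N1)–(N5): for every ε > 0 there exist n_0 ∈ ℕ and r_0 > 0 such that for every n > n_0 and every r ∈ (0, r_0), one has m_n([0,r])/r^{h_n} ≤ 1 + ε. -/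
open Set Filter MeasureTheory Topology

noncomputable section

lemma aux_iSup_le {f : ℕ → ℝ} {s : Set ℕ} (hne : (⨆ k ∈ s, f k) ≠ 0) {k : ℕ} (hk : k ∈ s) :
    f k ≤ ⨆ k ∈ s, f k := by
  have hb : BddAbove (Set.range fun k => ⨆ (_ : k ∈ s), f k) := by
    by_contra hb
    exact hne (Real.iSup_of_not_bddAbove hb)
  have := le_ciSup hb k
  simpa [ciSup_pos hk] using this

lemma aux_distortion {f : ℝ → ℝ} (hc : ContinuousOn f (Set.Icc 0 1)) (hne : distortion f ≠ 0)
    {x y : ℝ} (hx : x ∈ Set.Icc (0 : ℝ) 1) (hy : y ∈ Set.Icc (0 : ℝ) 1) :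
    |f y| / |f x| ≤ distortion f := by
  have hb : BddAbove (Set.range fun x => ⨆ (_ : x ∈ Set.Icc (0 : ℝ) 1),
      ⨆ y ∈ Set.Icc (0 : ℝ) 1, |f y| / |f x|) := by
    by_contra hb
    exact hne (Real.iSup_of_not_bddAbove hb)
  have h1 := le_ciSup hb x
  simp only [ciSup_pos hx] at h1
  refine le_trans ?_ h1
  obtain ⟨A, hA⟩ := isCompact_Icc.exists_bound_of_continuousOn hc
  have hA0 : 0 ≤ A := (norm_nonneg _).trans (hA x hx)
  have hb2 : BddAbove (Set.range fun y => ⨆ (_ : y ∈ Set.Icc (0 : ℝ) 1), |f y| / |f x|) := by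
    refine ⟨A / |f x|, ?_⟩
    rintro _ ⟨z, rfl⟩
    refine Real.iSup_le (fun hz => ?_) (by positivity)
    have := hA z hz
    rw [Real.norm_eq_abs] at this
    gcongr
  have h2 := le_ciSup hb2 y
  simpa only [ciSup_pos hy] using h2

lemma b_pos (S : NonlinearIFS) (k : ℕ) : 0 < S.b k := by
  have h1 : 0 ≤ S.b (k + 1) := S.b_anti.antitone.le_of_tendsto S.b_lim (k + 1)
  exact h1.trans_lt (S.b_anti (Nat.lt_succ_self k))

lemma g_mem (S : NonlinearIFS) {k : ℕ} (hk : 1 ≤ k) {x : ℝ} (hx : x ∈ Set.Icc (0 : ℝ) 1) :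
    S.g k x ∈ Set.Icc (S.b k) (S.b (k - 1)) := by
  rw [← S.g_image k hk]
  exact Set.mem_image_of_mem _ hx

lemma g_mem' (S : NonlinearIFS) {k : ℕ} (hk : 1 ≤ k) {x : ℝ} (hx : x ∈ Set.Icc (0 : ℝ) 1) :
    S.g k x ∈ Set.Icc (0 : ℝ) 1 := by
  have := g_mem S hk hx
  refine ⟨(b_pos S k).le.trans this.1, this.2.trans ?_⟩
  rw [← S.b_zero]
  exact S.b_anti.antitone (Nat.zero_le _)

lemma word_mem (S : NonlinearIFS) (w : List ℕ) (hw : ∀ i ∈ w, 1 ≤ i) {x : ℝ}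
    (hx : x ∈ Set.Icc (0 : ℝ) 1) : wordComp S.g w x ∈ Set.Icc (0 : ℝ) 1 := by
  induction w with
  | nil => simpa [wordComp] using hx
  | cons k w ih =>
    simp only [List.mem_cons, forall_eq_or_imp] at hw
    exact g_mem' S hw.1 (ih hw.2)

lemma word_append (g : ℕ → ℝ → ℝ) (u v : List ℕ) (x : ℝ) :
    wordComp g (u ++ v) x = wordComp g u (wordComp g v x) := by
  induction u with
  | nil => rfl
  | cons k u ih => simp [wordComp, ih]

lemma mem_limitSet {g : ℕ → ℝ → ℝ} {n : ℕ} {x : ℝ} : x ∈ limitSet g n ↔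
    ∀ l : ℕ, ∃ w : List ℕ, (w.length = l + 1 ∧ ∀ i ∈ w, 1 ≤ i ∧ i ≤ n) ∧
      ∃ y ∈ Set.Icc (0 : ℝ) 1, wordComp g w y = x := by
  simp only [limitSet, Set.mem_iInter, Set.mem_iUnion, Set.mem_image, Set.mem_ofPred_eq,
    exists_prop]

lemma limitSet_sub_Icc (S : NonlinearIFS) (n : ℕ) : limitSet S.g n ⊆ Set.Icc 0 1 := by
  intro x hx
  obtain ⟨w, ⟨-, hw⟩, y, hy, rfl⟩ := mem_limitSet.1 hx 0
  exact word_mem S w (fun i hi => (hw i hi).1) hy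

lemma limitSet_sub (S : NonlinearIFS) (n : ℕ) {x : ℝ} (hx : x ∈ limitSet S.g n) :
    ∃ k, 1 ≤ k ∧ k ≤ n ∧ x ∈ S.g k '' limitSet S.g n := by
  have key : ∀ l : ℕ, ∃ k : Fin (n + 1), 1 ≤ (k : ℕ) ∧ ∃ w : List ℕ,
      (w.length = l + 1 ∧ ∀ i ∈ w, 1 ≤ i ∧ i ≤ n) ∧
      ∃ y ∈ Set.Icc (0 : ℝ) 1, S.g k (wordComp S.g w y) = x := by
    intro l
    obtain ⟨w, ⟨hl, hw⟩, y, hy, h⟩ := mem_limitSet.1 hx (l + 1)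
    match w, hl, hw, h with
    | k :: w, hl, hw, h =>
      simp only [List.mem_cons, forall_eq_or_imp] at hw
      exact ⟨⟨k, by omega⟩, hw.1.1, w, ⟨by simpa using hl, hw.2⟩, y, hy, h⟩
  choose k hk w hw y hy h using key
  obtain ⟨k0, hk0⟩ := Finite.exists_infinite_fiber k
  have hinf : (k ⁻¹' {k0}).Infinite := Set.infinite_coe_iff.1 hk0
  obtain ⟨l0, hl0⟩ := hinf.nonempty
  have hl0 : k l0 = k0 := hl0
  have h1 : 1 ≤ (k0 : ℕ) := hl0 ▸ hk l0
  refine ⟨k0, h1, by omega, wordComp S.g (w l0) (y l0), ?_, by rw [← hl0]; exact h l0⟩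
  rw [mem_limitSet]
  intro l
  obtain ⟨m, hm, hlm⟩ := hinf.exists_gt l
  have hm : k m = k0 := hm
  have heq : wordComp S.g (w m) (y m) = wordComp S.g (w l0) (y l0) := by
    apply (S.g_anti k0 h1).injOn
    · exact word_mem S _ (fun i hi => ((hw m).2 i hi).1) (hy m)
    · exact word_mem S _ (fun i hi => ((hw l0).2 i hi).1) (hy l0)
    · have e1 := h m
      have e2 := h l0
      rw [hm] at e1
      rw [hl0] at e2
      rw [e1, e2]
  rw [← heq]
  refine ⟨(w m).take (l + 1), ⟨?_, ?_⟩, wordComp S.g ((w m).drop (l + 1)) (y m), ?_, ?_⟩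
  · rw [List.length_take, (hw m).1]; omega
  · intro i hi
    exact (hw m).2 i (List.mem_of_mem_take hi)
  · exact word_mem S _ (fun i hi => ((hw m).2 i (List.mem_of_mem_drop hi)).1) (hy m)
  · rw [← word_append, List.take_append_drop]

lemma g_meas (S : NonlinearIFS) {k : ℕ} (hk : 1 ≤ k) {d : ℝ} (hd : 0 < d)
    (hne : distortion (S.g' k) ≠ 0) (hdd : distortion (S.g' k) ≤ 1 + d) (n : ℕ) {s : ℝ} (hs : 0 ≤ s) :
    μH[s] (S.g k '' limitSet S.g n) ≤
      ENNReal.ofReal (((1 + d) * (S.b (k - 1) - S.b k)) ^ s) * μH[s] (limitSet S.g n) := by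
  have hlt : S.b k < S.b (k - 1) := S.b_anti (by omega)
  have hL : 0 ≤ (1 + d) * (S.b (k - 1) - S.b k) := mul_nonneg (by linarith) (by linarith)
  have hgc : ContinuousOn (S.g k) (Set.Icc 0 1) :=
    fun x hx => (S.deriv1 k hk x hx).continuousAt.continuousWithinAt
  have hgc' : ContinuousOn (S.g' k) (Set.Icc 0 1) :=
    fun x hx => (S.deriv2 k hk x hx).continuousAt.continuousWithinAt
  obtain ⟨x, hx, hxe⟩ := exists_hasDerivAt_eq_slope (S.g k) (S.g' k) (zero_lt_one) hgc
    (fun x hx => S.deriv1 k hk x (Set.Ioo_subset_Icc_self hx))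
  rw [S.g_zero k hk, S.g_one k hk] at hxe
  have hxa : |S.g' k x| = S.b (k - 1) - S.b k := by
    rw [hxe, abs_of_nonpos (by linarith)]; ring
  have hlip : LipschitzOnWith (Real.toNNReal ((1 + d) * (S.b (k - 1) - S.b k))) (S.g k) (Set.Icc 0 1) := by
    refine (convex_Icc 0 1).lipschitzOnWith_of_nnnorm_hasDerivWithin_le
      (fun z hz => (S.deriv1 k hk z hz).hasDerivWithinAt) (fun z hz => ?_)
    rw [← NNReal.coe_le_coe, Real.coe_toNNReal _ hL, coe_nnnorm, Real.norm_eq_abs]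
    change |S.g' k z| ≤ (1 + d) * (S.b (k - 1) - S.b k)
    have := (aux_distortion hgc' hne (Set.Ioo_subset_Icc_self hx) hz).trans hdd
    rw [hxa, div_le_iff₀ (by linarith)] at this
    exact this
  have := (hlip.mono (limitSet_sub_Icc S n)).hausdorffMeasure_image_le hs
  refine this.trans (le_of_eq ?_)
  rw [← ENNReal.ofReal_rpow_of_nonneg hL hs]
  rfl

lemma holder_sum (S : NonlinearIFS) (p n : ℕ) {s : ℝ} (hs : 0 < s) (hs1 : s ≤ 1) :
    ∑ k ∈ Finset.Ioc p n, (S.b (k - 1) - S.b k) ^ s ≤ (n : ℝ) ^ (1 - s) * S.b p ^ s := by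
  have hnn : ∀ k, 0 ≤ S.b (k - 1) - S.b k := fun k =>
    sub_nonneg.2 (S.b_anti.antitone (Nat.sub_le _ _))
  rcases le_or_gt n p with hnp | hnp
  · rw [Finset.Ioc_eq_empty_of_le hnp, Finset.sum_empty]
    have := b_pos S p
    positivity
  have htel : ∑ k ∈ Finset.Ioc p n, (S.b (k - 1) - S.b k) = S.b p - S.b n := by
    clear hs hs1
    induction n, hnp.le using Nat.le_induction with
    | base => simp
    | succ m hm ih =>
      rcases Nat.eq_or_lt_of_le hm with rfl | hm'
      · simp
      · rw [Finset.sum_Ioc_succ_top hm, ih hm']; simp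
  set N : ℝ := ((Finset.Ioc p n).card : ℝ) with hN
  have hNpos : 0 < N := by
    rw [hN]; norm_cast; simpa using hnp
  have hNle : N ≤ n := by
    rw [hN]; norm_cast; simp
  have hj := Real.rpow_sum_le_const_mul_sum_rpow_of_nonneg (Finset.Ioc p n)
    (f := fun k => (S.b (k - 1) - S.b k) ^ s) (p := 1 / s) (by rw [le_div_iff₀ hs]; linarith)
    (fun k _ => Real.rpow_nonneg (hnn k) _)
  have hsimp : ∀ k, ((S.b (k - 1) - S.b k) ^ s) ^ (1 / s) = S.b (k - 1) - S.b k := fun k => by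
    rw [← Real.rpow_mul (hnn k), mul_one_div_cancel hs.ne', Real.rpow_one]
  simp only [hsimp] at hj
  rw [htel] at hj
  have hA : 0 ≤ ∑ k ∈ Finset.Ioc p n, (S.b (k - 1) - S.b k) ^ s :=
    Finset.sum_nonneg fun k _ => Real.rpow_nonneg (hnn k) _
  have hbp := b_pos S p
  have hbn := b_pos S n
  have h2 : (∑ k ∈ Finset.Ioc p n, (S.b (k - 1) - S.b k) ^ s) ^ (1 / s) ≤
      N ^ (1 / s - 1) * S.b p := by
    refine hj.trans ?_
    gcongr
    linarith
  have h3 := Real.rpow_le_rpow (Real.rpow_nonneg hA _) h2 hs.le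
  rw [← Real.rpow_mul hA, one_div_mul_cancel hs.ne', Real.rpow_one,
    Real.mul_rpow (by positivity) hbp.le, ← Real.rpow_mul hNpos.le] at h3
  have he : (1 / s - 1) * s = 1 - s := by field_simp
  rw [he] at h3
  refine h3.trans ?_
  gcongr

theorem nonlinear_density_zero_small_r (S : NonlinearIFS) :
    ∀ ε > (0 : ℝ), ∃ n₀ : ℕ, ∃ r₀ > (0 : ℝ), ∀ n > n₀, ∀ r : ℝ, 0 < r → r < r₀ →
      normMeas S n (Set.Icc 0 r) / ENNReal.ofReal (r ^ S.h n) ≤ ENNReal.ofReal (1 + ε) := by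
  intro ε hε
  obtain ⟨d, hd, hdε⟩ : ∃ d : ℝ, 0 < d ∧ (1 + d) ^ 3 ≤ 1 + ε := by
    refine ⟨min 1 (ε / 7), by positivity, ?_⟩
    have h1 := min_le_left 1 (ε / 7)
    have h2 := min_le_right 1 (ε / 7)
    have h0 : 0 < min 1 (ε / 7) := by positivity
    set d := min 1 (ε / 7)
    nlinarith [mul_nonneg h0.le (sub_nonneg.2 h1), mul_nonneg (mul_nonneg h0.le h0.le) (sub_nonneg.2 h1)]
  have ev2 := S.N2.eventually (Ioo_mem_nhds (zero_lt_one) (by linarith : (1 : ℝ) < 1 + d))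
  have ev4 := S.N4.eventually (Ioo_mem_nhds (zero_lt_one) (by linarith : (1 : ℝ) < 1 + d))
  obtain ⟨P2, hP2⟩ := ev2.exists
  obtain ⟨P4, hP4⟩ := Filter.eventually_atTop.1 ev4
  have hlog : 0 < Real.log (1 + d) := Real.log_pos (by linarith)
  have ev1 := S.N1.eventually (Iio_mem_nhds (lt_min zero_lt_one hlog))
  obtain ⟨n1, hn1⟩ := Filter.eventually_atTop.1 ev1
  refine ⟨max n1 3, S.b (max P2 P4), b_pos S _, ?_⟩
  intro n hn r hr hrr
  have hnn1 := hn1 n (by omega)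
  have hn3 : 3 ≤ n := by omega
  have hlogn : 1 ≤ Real.log n := by
    rw [Real.le_log_iff_exp_le (by positivity)]
    have h3 : (3 : ℝ) ≤ n := by exact_mod_cast hn3
    linarith [Real.exp_one_lt_d9]
  have hnlt1 : (1 - S.h n) * Real.log n < 1 := hnn1.trans_le (min_le_left _ _)
  have hnlt2 : (1 - S.h n) * Real.log n < Real.log (1 + d) := hnn1.trans_le (min_le_right _ _)
  have hpos : 0 < S.h n := by
    by_contra hh
    push Not at hh
    nlinarith
  have hle1 : S.h n ≤ 1 := by
    have h1 : dimH (limitSet S.g n) ≤ 1 := by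
      refine (dimH_mono (Set.subset_univ _)).trans ?_
      rw [Real.dimH_univ]
    rw [S.h_dim n (by omega)] at h1
    simpa using h1
  set s := S.h n with hs
  -- locate r
  have hex : ∃ m, S.b m ≤ r := by
    obtain ⟨m, hm⟩ := (S.b_lim.eventually (Iio_mem_nhds hr)).exists
    exact ⟨m, hm.le⟩
  classical
  obtain ⟨p, hp1, hp2⟩ : ∃ p, S.b (p + 1) ≤ r ∧ r < S.b p := by
    have hm := Nat.find_spec hex
    have hmin := fun k => Nat.find_min (m := k) hex
    rcases hq : Nat.find hex with _ | p
    · rw [hq] at hm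
      have : S.b (max P2 P4) ≤ S.b 0 := S.b_anti.antitone (Nat.zero_le _)
      linarith
    · rw [hq] at hm
      exact ⟨p, hm, not_le.1 (hmin p (by omega))⟩
  have hpP : max P2 P4 ≤ p := by
    by_contra hlt
    push Not at hlt
    have : S.b (max P2 P4) ≤ S.b (p + 1) := S.b_anti.antitone hlt
    linarith
  have hratio : S.b p ≤ (1 + d) * r := by
    have h1 : S.b p / S.b (p + 1) ≤ 1 + d := by
      have := aux_iSup_le (f := fun k => S.b k / S.b (k + 1)) (s := Set.Ici P2) hP2.1.ne'
        (k := p) (le_trans (le_max_left _ _) hpP)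
      exact this.trans hP2.2.le
    rw [div_le_iff₀ (b_pos S _)] at h1
    have : (1 + d) * S.b (p + 1) ≤ (1 + d) * r := by gcongr
    linarith
  have hnpow : (n : ℝ) ^ (1 - s) ≤ 1 + d := by
    rw [Real.rpow_def_of_pos (by positivity), mul_comm, ← Real.le_log_iff_exp_le (by linarith)]
    exact hnlt2.le
  have hcover : Set.Icc 0 r ∩ limitSet S.g n ⊆
      ⋃ k ∈ Finset.Ioc p n, S.g k '' limitSet S.g n := by
    rintro x ⟨hxr, hx⟩
    obtain ⟨k, hk1, hkn, hk⟩ := limitSet_sub S n hx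
    simp only [Set.mem_iUnion]
    refine ⟨k, ?_, hk⟩
    rw [Finset.mem_Ioc]
    refine ⟨?_, hkn⟩
    obtain ⟨y, hy, rfl⟩ := hk
    have h1 := (g_mem S hk1 (limitSet_sub_Icc S n hy)).1
    exact S.b_anti.lt_iff_gt.1 (by linarith [hxr.2])
  have h1d : 0 ≤ 1 + d := by linarith
  have hpow1 : (1 + d) ^ s ≤ 1 + d := by
    calc (1 + d) ^ s ≤ (1 + d) ^ (1 : ℝ) := Real.rpow_le_rpow_of_exponent_le (by linarith) hle1
      _ = 1 + d := Real.rpow_one _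
  have hreal : ∑ k ∈ Finset.Ioc p n, ((1 + d) * (S.b (k - 1) - S.b k)) ^ s ≤ (1 + ε) * r ^ s := by
    have hnn : ∀ k, 0 ≤ S.b (k - 1) - S.b k := fun k =>
      sub_nonneg.2 (S.b_anti.antitone (Nat.sub_le _ _))
    simp_rw [Real.mul_rpow h1d (hnn _)]
    rw [← Finset.mul_sum]
    have hbp : S.b p ^ s ≤ (1 + d) * r ^ s := by
      calc S.b p ^ s ≤ ((1 + d) * r) ^ s := Real.rpow_le_rpow (b_pos S p).le hratio hpos.le
        _ = (1 + d) ^ s * r ^ s := Real.mul_rpow h1d hr.le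
        _ ≤ _ := by gcongr
    have hbs : 0 ≤ S.b p ^ s := Real.rpow_nonneg (b_pos S p).le _
    calc (1 + d) ^ s * ∑ k ∈ Finset.Ioc p n, (S.b (k - 1) - S.b k) ^ s
        ≤ (1 + d) * ((n : ℝ) ^ (1 - s) * S.b p ^ s) := by
          gcongr
          · exact Finset.sum_nonneg fun k _ => Real.rpow_nonneg (hnn k) _
          exact holder_sum S p n hpos hle1
      _ ≤ (1 + d) * ((1 + d) * ((1 + d) * r ^ s)) := by gcongr
      _ = (1 + d) ^ 3 * r ^ s := by ring
      _ ≤ _ := by gcongr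
  unfold normMeas
  rw [← hs]
  apply ENNReal.div_le_of_le_mul
  apply ENNReal.div_le_of_le_mul
  calc μH[s] (Set.Icc 0 r ∩ limitSet S.g n)
      ≤ ∑ k ∈ Finset.Ioc p n, μH[s] (S.g k '' limitSet S.g n) :=
        (measure_mono hcover).trans (measure_biUnion_finset_le _ _)
    _ ≤ ∑ k ∈ Finset.Ioc p n, ENNReal.ofReal (((1 + d) * (S.b (k - 1) - S.b k)) ^ s) *
          μH[s] (limitSet S.g n) := by
        refine Finset.sum_le_sum fun k hk => ?_
        rw [Finset.mem_Ioc] at hk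
        have h4 := hP4 k (by have := le_max_right P2 P4; omega)
        exact g_meas S (by omega) hd h4.1.ne' h4.2.le n hpos.le
    _ = ENNReal.ofReal (∑ k ∈ Finset.Ioc p n, ((1 + d) * (S.b (k - 1) - S.b k)) ^ s) *
          μH[s] (limitSet S.g n) := by
        rw [← Finset.sum_mul, ENNReal.ofReal_sum_of_nonneg]
        intro k _
        exact Real.rpow_nonneg (mul_nonneg h1d
          (sub_nonneg.2 (S.b_anti.antitone (Nat.sub_le _ _)))) _
    _ ≤ _ := by
        rw [← ENNReal.ofReal_mul (by linarith)]
        gcongr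
end
end
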